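/- Let Δ⁺ be the positive root system of a simple root system of type A, B, C, D, E, F, or G of rank n, and let α₁,...,α_k ∈ Δ⁺ be linearly dependent. Then there exist integers a₁,...,a_k, not all zero, with a₁α₁ + ··· + a_kα_k = 0 and a_i = ±1 for some index i. -/

import Mathlib

open Finset

/-- A linearly dependent finite family over `ℚ` contains a circuit: its relation can be scaled to be
integral and primitive, no coefficient vanishes, and the relation is the only obstruction to
prescribing the values of a linear functional on the family. -/
theorem exists_primitive_circuit {V ι : Type*} [AddCommGroup V] [Module ℚ V] [Fintype ι]
    [DecidableEq ι] (v : ι → V) (hdep : ¬ LinearIndependent ℚ v) :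
    ∃ (s : Finset ι) (c : ι → ℤ), (∀ i ∈ s, c i ≠ 0) ∧ s.gcd c = 1 ∧
      ∑ i ∈ s, (c i : ℚ) • v i = 0 ∧
      ∀ h : ι → ℚ, ∑ i ∈ s, (c i : ℚ) * h i = 0 →
        ∃ g : V →ₗ[ℚ] ℚ, ∀ i ∈ s, g (v i) = h i := by
  obtain ⟨s, hs, hmin⟩ := wellFounded_lt.has_min
    {s : Finset ι | ¬ LinearIndepOn ℚ v (s : Set ι)}
    ⟨univ, by simpa [linearIndepOn_univ_iff] using hdep⟩
  have herase : ∀ i ∈ s, LinearIndepOn ℚ v (s.erase i : Set ι) := fun i hi ↦ by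
    by_contra h
    exact hmin _ (by simpa using h) (Finset.erase_ssubset hi)
  have hrel : ∃ q : ι → ℚ, ∑ i ∈ s, q i • v i = 0 ∧ ∃ i ∈ s, q i ≠ 0 := by
    have := hs
    rw [Set.mem_ofPred_eq, linearIndepOn_finset_iff] at this
    push Not at this
    exact this
  obtain ⟨q, hq, i₀, hi₀, hqi₀⟩ := hrel
  have hq0 : ∀ i ∈ s, q i ≠ 0 := by
    intro i hi h
    have hne : i₀ ≠ i := by rintro rfl; exact hqi₀ h
    refine hqi₀ (linearIndepOn_finset_iff.1 (herase i hi) q ?_ i₀ (mem_erase.2 ⟨hne, hi₀⟩))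
    rw [← hq, ← Finset.add_sum_erase _ _ hi, h, zero_smul, zero_add]
  obtain ⟨⟨d, hd⟩, hint⟩ :=
    IsLocalization.exist_integer_multiples (nonZeroDivisors ℤ) s q
  have hd0 : (d : ℚ) ≠ 0 := by exact_mod_cast nonZeroDivisors.ne_zero hd
  choose! b hb using hint
  have hb' : ∀ i ∈ s, (b i : ℚ) = d * q i := fun i hi ↦ by simpa using hb i hi
  obtain ⟨c, hc, hgcd⟩ := s.extract_gcd b ⟨i₀, hi₀⟩
  have hcq : ∀ i ∈ s, ((s.gcd b : ℤ) : ℚ) * c i = d * q i := fun i hi ↦ by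
    rw [← hb' i hi]; exact_mod_cast (hc i hi).symm
  have hg0 : ((s.gcd b : ℤ) : ℚ) ≠ 0 := fun h ↦ by
    have := hcq i₀ hi₀
    rw [h, zero_mul] at this
    exact mul_ne_zero hd0 hqi₀ this.symm
  have hc0 : ∀ i ∈ s, c i ≠ 0 := fun i hi h ↦ by
    have := hcq i hi
    rw [h, Int.cast_zero, mul_zero] at this
    exact mul_ne_zero hd0 (hq0 i hi) this.symm
  have hcv : ∑ i ∈ s, (c i : ℚ) • v i = 0 := by
    refine (smul_eq_zero.1 ?_).resolve_left hg0
    rw [Finset.smul_sum, ← smul_zero (d : ℚ), ← hq, Finset.smul_sum]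
    exact Finset.sum_congr rfl fun i hi ↦ by rw [smul_smul, smul_smul, hcq i hi]
  refine ⟨s, c, hc0, hgcd, hcv, fun h hh ↦ ?_⟩
  obtain ⟨p, hp⟩ := LinearMap.exists_leftInverse_of_injective
    (Finsupp.linearCombination ℚ fun j : (s.erase i₀ : Set ι) ↦ v j) (LinearMap.ker_eq_bot.2 (herase i₀ hi₀))
  have hval : ∀ i ∈ s.erase i₀,
      ((Finsupp.linearCombination ℚ fun j : (s.erase i₀ : Set ι) ↦ h j) ∘ₗ p) (v i) = h i := by
    intro i hi
    have := LinearMap.congr_fun hp (Finsupp.single ⟨i, hi⟩ 1)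
    simp only [LinearMap.comp_apply, Finsupp.linearCombination_single, one_smul,
      LinearMap.id_apply] at this
    simp [this]
  set g := (Finsupp.linearCombination ℚ fun j : (s.erase i₀ : Set ι) ↦ h j) ∘ₗ p
  refine ⟨g, fun i hi ↦ ?_⟩
  by_cases hne : i = i₀
  · subst hne
    have hgv : ∑ j ∈ s, (c j : ℚ) * g (v j) = 0 := by simpa using congrArg g hcv
    rw [← Finset.add_sum_erase _ _ hi, Finset.sum_congr rfl fun j hj ↦ by rw [hval j hj]] at hgv
    rw [← Finset.add_sum_erase _ _ hi] at hh
    have hci : (c i : ℚ) ≠ 0 := by exact_mod_cast hc0 i hi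
    exact mul_left_cancel₀ hci (by linarith)
  · exact hval i (mem_erase.2 ⟨hne, hi⟩)

/-- The lattice generated by finitely many vectors has a point closest to a given vector, with
respect to a positive definite form over `ℚ`. -/
theorem exists_closest_lattice_point {V ι : Type*} [AddCommGroup V] [Module ℚ V] [Fintype ι]
    (B : V →ₗ[ℚ] V →ₗ[ℚ] ℚ) (hpos : ∀ x, 0 ≤ B x x) (w : ι → V) (y : V) :
    ∃ z : ι → ℤ, ∀ z' : ι → ℤ,
      B (y - ∑ i, (z i : ℚ) • w i) (y - ∑ i, (z i : ℚ) • w i) ≤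
        B (y - ∑ i, (z' i : ℚ) • w i) (y - ∑ i, (z' i : ℚ) • w i) := by
  let u : Option ι → V := fun o ↦ o.elim y w
  obtain ⟨⟨d, hd⟩, hint⟩ := IsLocalization.exist_integer_multiples_of_finite (nonZeroDivisors ℤ)
    fun p : Option ι × Option ι ↦ B (u p.1) (u p.2)
  have hd0 : (d : ℚ) ≠ 0 := by exact_mod_cast nonZeroDivisors.ne_zero hd
  let R := (Int.castRingHom ℚ).range
  have hR : ∀ m : ℤ, (m : ℚ) ∈ R := fun m ↦ ⟨m, rfl⟩
  have hmem : ∀ o o', (d : ℚ) * B (u o) (u o') ∈ R := fun o o' ↦ by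
    obtain ⟨m, hm⟩ := hint (o, o')
    exact ⟨m, by simpa using hm⟩
  have hsq : ∀ z : ι → ℤ,
      (d : ℚ) ^ 2 * B (y - ∑ i, (z i : ℚ) • w i) (y - ∑ i, (z i : ℚ) • w i) ∈ R := by
    intro z
    have hyy := hmem none none
    have hyw := fun i ↦ hmem none (some i)
    have hwy := fun i ↦ hmem (some i) none
    have hww := fun i j ↦ hmem (some i) (some j)
    simp only [u, Option.elim] at hyy hyw hwy hww
    have : (d : ℚ) ^ 2 * B (y - ∑ i, (z i : ℚ) • w i) (y - ∑ i, (z i : ℚ) • w i) =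
        d * ((d * B y y - ∑ i, z i * (d * B (w i) y)) -
          ∑ i, z i * (d * B y (w i) - ∑ j, z j * (d * B (w j) (w i)))) := by
      simp only [map_sub, map_sum, map_smul, LinearMap.sub_apply, LinearMap.sum_apply,
        LinearMap.smul_apply, smul_eq_mul, pow_two, mul_assoc, mul_sub, Finset.mul_sum,
        mul_left_comm _ (d : ℚ)]
    rw [this]
    refine mul_mem (hR d) (sub_mem (sub_mem hyy (sum_mem fun i _ ↦ mul_mem (hR _) (hwy i)))
      (sum_mem fun i _ ↦ mul_mem (hR _) (sub_mem (hyw i)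
        (sum_mem fun j _ ↦ mul_mem (hR _) (hww j i)))))
  choose N hN using hsq
  have hN0 : ∀ z, 0 ≤ N z := fun z ↦ by
    have : (0 : ℚ) ≤ (N z : ℚ) := by
      rw [show (N z : ℚ) = _ from hN z]
      exact mul_nonneg (sq_nonneg _) (hpos _)
    exact_mod_cast this
  obtain ⟨z, -, hz⟩ := (measure fun z ↦ (N z).toNat).wf.has_min Set.univ ⟨0, trivial⟩
  refine ⟨z, fun z' ↦ ?_⟩
  have hle : N z ≤ N z' := by
    have h : ¬ (N z').toNat < (N z).toNat := hz z' trivial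
    have := hN0 z
    have := hN0 z'
    omega
  have hle' : (N z : ℚ) ≤ (N z' : ℚ) := by exact_mod_cast hle
  rw [show (N z : ℚ) = _ from hN z, show (N z' : ℚ) = _ from hN z'] at hle'
  exact le_of_mul_le_mul_left hle' (by positivity)

/-- Given finitely many vectors with integral Cartan numbers, every vector `y` is close to one
pairing integrally with all of them: the pairings differ by at most `1`. -/
theorem exists_integral_pairing_near {V ι : Type*} [AddCommGroup V] [Module ℚ V] [Fintype ι]
    [DecidableEq ι] (B : V →ₗ[ℚ] V →ₗ[ℚ] ℚ) (hsymm : ∀ x y, B x y = B y x)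
    (hpos : ∀ x, x ≠ 0 → 0 < B x x) (α : ι → V) (hα : ∀ i, α i ≠ 0)
    (hcrys : ∀ i j, ∃ m : ℤ, 2 * B (α j) (α i) / B (α i) (α i) = m) (y : V) :
    ∃ x, ∀ i, (∃ m : ℤ, B x (α i) = m) ∧ |B y (α i) - B x (α i)| ≤ 1 := by
  let w : ι → V := fun i ↦ (2 / B (α i) (α i)) • α i
  obtain ⟨z, hz⟩ := exists_closest_lattice_point B
    (fun x ↦ by
      by_cases hx : x = 0
      · simp [hx]
      · exact (hpos x hx).le) w y
  choose C hC using hcrys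
  refine ⟨∑ i, (z i : ℚ) • w i, fun j ↦ ⟨⟨∑ i, z i * C i j, ?_⟩, ?_⟩⟩
  · simp only [w, map_sum, map_smul, LinearMap.sum_apply, LinearMap.smul_apply, smul_eq_mul,
      Int.cast_sum, Int.cast_mul, ← hC]
    refine Finset.sum_congr rfl fun i _ ↦ ?_
    rw [hsymm (α i) (α j)]
    ring
  rw [← LinearMap.sub_apply, ← map_sub]
  set r := y - ∑ i, (z i : ℚ) • w i with hr
  have hshift : ∀ e : ℤ, B r r ≤ B (r - (e : ℚ) • w j) (r - (e : ℚ) • w j) := by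
    intro e
    have := hz (z + Pi.single j e : ι → ℤ)
    have hsum : y - ∑ i, ((z + Pi.single j e : ι → ℤ) i : ℚ) • w i = r - (e : ℚ) • w j := by
      simp [hr, Pi.single_apply, add_smul, Finset.sum_add_distrib, sub_sub, ite_smul]
    rwa [hsum] at this
  have hjj := hpos _ (hα j)
  have hexp : ∀ e : ℤ, 0 ≤ e ^ 2 - e * B r (α j) := by
    intro e
    have h := hshift e
    have : B (r - (e : ℚ) • w j) (r - (e : ℚ) • w j) - B r r =
        4 / B (α j) (α j) * ((e : ℚ) ^ 2 - e * B r (α j)) := by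
      simp only [w, map_sub, map_smul, LinearMap.sub_apply, LinearMap.smul_apply, smul_eq_mul,
        hsymm (α j) r]
      field_simp
      ring
    have h4 : 0 < 4 / B (α j) (α j) := by positivity
    exact nonneg_of_mul_nonneg_right (by linarith) h4
  rw [abs_le]
  have h1 := hexp 1
  have h2 := hexp (-1)
  push_cast at h1 h2
  constructor <;> linarith

/-- Lemma (leCanChooseCoeffOne): let `Δ` be a simple (i.e. irreducible,
reduced, crystallographic) root system of rank `n` -- equivalently, a root
system of one of the types A, B, C, D, E, F, G -- realized in `ℚⁿ` with respect
to a positive definite symmetric bilinear form `B`, and let `Δ⁺` be the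
positive system cut out by a linear functional `f` not vanishing on any root.
If `α₁, ..., α_k ∈ Δ⁺` are linearly dependent, then there is an integral linear
relation among them in which some coefficient is `+1` or `-1`. -/
theorem exists_relation_with_unit_coefficient
    (n : ℕ) (B : (Fin n → ℚ) →ₗ[ℚ] (Fin n → ℚ) →ₗ[ℚ] ℚ)
    (hBsymm : ∀ x y, B x y = B y x)
    (hBpos : ∀ x : Fin n → ℚ, x ≠ 0 → 0 < B x x)
    (Δ : Set (Fin n → ℚ)) (hfin : Δ.Finite) (h0 : (0 : Fin n → ℚ) ∉ Δ)
    (hspan : Submodule.span ℚ Δ = ⊤)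
    (hneg : ∀ α ∈ Δ, -α ∈ Δ)
    (hreduced : ∀ α ∈ Δ, ∀ c : ℚ, c • α ∈ Δ → c = 1 ∨ c = -1)
    (hrefl : ∀ α ∈ Δ, ∀ β ∈ Δ, β - (2 * B β α / B α α) • α ∈ Δ)
    (hcrys : ∀ α ∈ Δ, ∀ β ∈ Δ, ∃ z : ℤ, 2 * B β α / B α α = (z : ℚ))
    (hirr : ∀ S T : Set (Fin n → ℚ), S ∪ T = Δ → S.Nonempty → T.Nonempty →
      (∀ a ∈ S, ∀ b ∈ T, B a b = 0) → False)
    (f : (Fin n → ℚ) →ₗ[ℚ] ℚ) (hf : ∀ α ∈ Δ, f α ≠ 0)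
    (k : ℕ) (α : Fin k → (Fin n → ℚ))
    (hα : ∀ i, α i ∈ Δ ∧ 0 < f (α i))
    (hdep : ¬ LinearIndependent ℚ α) :
    ∃ a : Fin k → ℤ, (∃ i, a i ≠ 0) ∧ (∑ i, (a i : ℚ) • α i) = 0 ∧
      ∃ i, a i = 1 ∨ a i = -1 := by
  classical
  obtain ⟨s, c, hc0, hgcd, hcα, hext⟩ := exists_primitive_circuit α hdep
  have hs : s.Nonempty := by
    rw [Finset.nonempty_iff_ne_empty]
    rintro rfl
    simp at hgcd
  have hs0 : (0 : ℚ) < s.card := by exact_mod_cast hs.card_pos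
  obtain ⟨b, hb⟩ := s.gcd_eq_sum_mul c
  rw [hgcd] at hb
  obtain ⟨g, hg⟩ := hext (fun i ↦ 1 / (s.card * c i) - b i) (by
    have hterm : ∀ i ∈ s, (c i : ℚ) * (1 / (s.card * c i) - b i) =
        1 / s.card - ((c i * b i : ℤ) : ℚ) := fun i hi ↦ by
      have : (c i : ℚ) ≠ 0 := by exact_mod_cast hc0 i hi
      push_cast
      field_simp
    rw [Finset.sum_congr rfl hterm, Finset.sum_sub_distrib, ← Int.cast_sum, ← hb]
    simp [hs0.ne'])
  have hBinj : Function.Injective B := by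
    rw [injective_iff_map_eq_zero]
    intro x hx
    by_contra h
    have := hBpos x h
    simp [hx] at this
  obtain ⟨y, rfl⟩ := (LinearMap.injective_iff_surjective_of_finrank_eq_finrank
    (Subspace.dual_finrank_eq (K := ℚ) (V := Fin n → ℚ)).symm).1 hBinj g
  obtain ⟨x, hx⟩ := exists_integral_pairing_near B hBsymm hBpos α
    (fun i h ↦ h0 (h ▸ (hα i).1)) (fun i j ↦ hcrys _ (hα i).1 _ (hα j).1) y
  choose m hm using fun i ↦ (hx i).1
  have hsum : ∑ i ∈ s, c i * (m i + b i) = 1 := by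
    have hcm : ∑ i ∈ s, (c i : ℚ) * m i = 0 := by simpa [hm] using congrArg (B x) hcα
    have hcm' : ∑ i ∈ s, c i * m i = 0 := by exact_mod_cast hcm
    simp only [mul_add, Finset.sum_add_distrib, hcm', ← hb, zero_add]
  have hnonneg : ∀ i ∈ s, 0 ≤ c i * (m i + b i) := by
    intro i hi
    have h := (hx i).2
    rw [hg i hi, hm i, abs_le] at h
    obtain hc | hc := (hc0 i hi).lt_or_gt
    · have hc' : (c i : ℚ) < 0 := by exact_mod_cast hc
      have : 1 / ((s.card : ℚ) * c i) < 0 :=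
        one_div_neg.2 (mul_neg_of_pos_of_neg hs0 hc')
      have hlt : ((m i + b i : ℤ) : ℚ) < 1 := by push_cast; linarith
      have hlt' : m i + b i < 1 := by exact_mod_cast hlt
      exact mul_nonneg_of_nonpos_of_nonpos hc.le (by omega)
    · have hc' : (0 : ℚ) < c i := by exact_mod_cast hc
      have : 0 < 1 / ((s.card : ℚ) * c i) := by positivity
      have hlt : (-1 : ℚ) < ((m i + b i : ℤ) : ℚ) := by push_cast; linarith
      have hlt' : -1 < m i + b i := by exact_mod_cast hlt
      exact mul_nonneg hc.le (by omega)
  obtain ⟨i, hi, hne⟩ := Finset.exists_ne_zero_of_sum_ne_zero (hsum.trans_ne one_ne_zero)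
  have hle := Finset.single_le_sum hnonneg hi
  have hone : c i * (m i + b i) = 1 := by
    have := hnonneg i hi
    omega
  refine ⟨fun j ↦ if j ∈ s then c j else 0, ⟨i, by simpa [hi] using hc0 i hi⟩, ?_, i, ?_⟩
  · simpa [ite_smul, Finset.sum_ite_mem] using hcα
  · simpa [hi] using Int.eq_one_or_neg_one_of_mul_eq_one hone
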